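/- For every β with π/3 < β < π/2, one has (1 / (8·cos(β)·(1 − 4·cos(β)²)²)) · (β / sin(β)) > 1. -/

import Mathlib

open Real

lemma poly_aux (c : ℝ) (h0 : 0 < c) (h1 : c < 1 / 2) :
    8 * c * (1 - 4 * c ^ 2) ^ 2 ≤ 1.15 := by
  obtain ⟨u, rfl⟩ : ∃ u, c = u / 2 := ⟨2 * c, by ring⟩
  have hu0 : 0 < u := by linarith
  have hu1 : u < 1 := by linarith
  have hq : 0 ≤ -4 * u ^ 3 - 8 * 0.4472 * u ^ 2 + 5.6 * u + 5.7 := by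
    have h2 : u ^ 2 ≤ u := by nlinarith
    have h3 : u ^ 3 ≤ u := by nlinarith
    linarith
  have := mul_nonneg (sq_nonneg (u - 0.4472)) hq
  nlinarith [pow_pos hu0 2, pow_pos hu0 3]

/-- For `π/3 < β < π/2`, `(1 / (8 cos β (1 − 4 cos²β)²)) · (β / sin β) > 1`. -/
theorem stmt_8 (β : ℝ) (h1 : π / 3 < β) (h2 : β < π / 2) :
    (1 / (8 * cos β * (1 - 4 * cos β ^ 2) ^ 2)) * (β / sin β) > 1 := by
  have hpi := pi_gt_d2
  have hc0 : 0 < cos β := cos_pos_of_mem_Ioo ⟨by linarith, h2⟩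
  have hs0 : 0 < sin β := sin_pos_of_pos_of_lt_pi (by linarith) (by linarith)
  have hc1 : cos β < 1 / 2 := by
    rw [← cos_pi_div_three]
    exact cos_lt_cos_of_nonneg_of_le_pi (by linarith) (by linarith) h1
  have hp := poly_aux _ hc0 hc1
  have hsq : 0 < 1 - 4 * cos β ^ 2 := by nlinarith
  have hP : 0 < 8 * cos β * (1 - 4 * cos β ^ 2) ^ 2 := by positivity
  have h3 : √3 < 1.7321 := by
    rw [sqrt_lt' (by norm_num)]; norm_num
  have hs : sin β ≤ √3 / 2 + (β - π / 3) / 2 := by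
    have e : sin β = √3 / 2 * cos (β - π / 3) + sin (β - π / 3) / 2 := by
      conv_lhs => rw [show β = π / 3 + (β - π / 3) by ring, sin_add]
      rw [sin_pi_div_three, cos_pi_div_three]; ring
    have a := sin_le (x := β - π / 3) (by linarith)
    have b := cos_le_one (β - π / 3)
    have := mul_le_mul_of_nonneg_left b (show 0 ≤ √3 / 2 by positivity)
    linarith
  have hb : 1.15 * sin β < β := by linarith
  rw [gt_iff_lt, div_mul_div_comm, one_mul, one_lt_div (by positivity)]
  exact lt_of_le_of_lt (mul_le_mul_of_nonneg_right hp hs0.le) hb
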